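/- Let n ≥ 1, d ≥ n−1, and let s ∈ ℝ with s > n − 1 − d. Then the function (k₁, …, k_n) ↦ ℋ^n( conv{0, k₁, …, k_n} )^s is locally integrable on (ℝ^d)^n: for every R > 0, ∫_{ {(k₁,…,k_n) : |k_i| ≤ R for all i} } ℋ^n( conv{0, k₁, …, k_n} )^s dk₁ … dk_n < ∞. (When s < 0 the integrand is interpreted as +∞ at points where the simplex has zero ℋ^n-measure; when d ≥ n this degenerate set is Lebesgue-null.) -/

import Mathlib

open MeasureTheory
open scoped ENNReal

lemma aux_rpow {x y : ℝ≥0∞} {z : ℝ} (hz : z ≤ 0) (h : x ≤ y) : y ^ z ≤ x ^ z := by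
  obtain ⟨t, rfl⟩ : ∃ t, z = -t := ⟨-z, by ring⟩
  rw [ENNReal.rpow_neg, ENNReal.rpow_neg, ENNReal.inv_le_inv]
  exact ENNReal.rpow_le_rpow h (by linarith)

lemma aux_pi (d : ℕ) (g : Fin d → ℝ → ℝ≥0∞) (hg : ∀ i, Measurable (g i)) :
    ∫⁻ x : Fin d → ℝ, ∏ i, g i (x i) ≤ ∏ i, ∫⁻ t, g i t := by
  induction d with
  | zero => simp [volume_pi]
  | succ d ih =>
    have h := (volume_preserving_piFinSuccAbove (fun _ : Fin (d+1) => ℝ) 0).symm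
    rw [← h.lintegral_comp_emb (MeasurableEquiv.measurableEmbedding _)]
    refine (lintegral_prod_le _).trans ?_
    simp only [Fin.prod_univ_succ]
    calc _ ≤ ∫⁻ x, g 0 x * ∏ i : Fin d, ∫⁻ t, g i.succ t := by
          refine lintegral_mono fun x => ?_
          have : ∀ y : Fin d → ℝ, g 0 ((MeasurableEquiv.piFinSuccAbove (fun _ : Fin (d+1) => ℝ) 0).symm (x, y) 0) * ∏ i : Fin d, g i.succ ((MeasurableEquiv.piFinSuccAbove (fun _ : Fin (d+1) => ℝ) 0).symm (x, y) i.succ) = g 0 x * ∏ i : Fin d, g i.succ (y i) := by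
            intro y
            simp [MeasurableEquiv.piFinSuccAbove]
          simp only [this]
          rw [lintegral_const_mul]
          · gcongr
            exact ih _ fun i => hg _
          · exact Finset.measurable_prod _ fun i _ => (hg _).comp (measurable_pi_apply i)
      _ = _ := by rw [lintegral_mul_const _ (hg 0)]

lemma aux_one (a R : ℝ) (ha : -1 < a) :
    ∫⁻ t, (Set.Icc (-R) R).indicator (fun t : ℝ => ENNReal.ofReal |t| ^ a) t < ⊤ := by
  rw [lintegral_indicator measurableSet_Icc]
  have h0 : ∫⁻ t in Set.Ioc 0 R, ENNReal.ofReal |t| ^ a < ⊤ := by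
    rcases le_total R 0 with hR | hR
    · simp [hR]
    have := (intervalIntegral.intervalIntegrable_rpow' ha (a := 0) (b := R))
    rw [intervalIntegrable_iff, Set.uIoc_of_le hR] at this
    refine lt_of_le_of_lt (le_of_eq ?_) this.hasFiniteIntegral
    refine setLIntegral_congr_fun measurableSet_Ioc fun t ht => ?_
    have : 0 < t := ht.1
    simp only
    rw [ENNReal.ofReal_rpow_of_pos (abs_pos.2 this.ne'), abs_of_pos this, Real.enorm_eq_ofReal (by positivity)]
  have h1 : ∫⁻ t in Set.Ico (-R) 0, ENNReal.ofReal |t| ^ a < ⊤ := by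
    have := (Measure.measurePreserving_neg (volume : Measure ℝ)).setLIntegral_comp_preimage_emb
      (MeasurableEquiv.neg ℝ).measurableEmbedding (fun t => ENNReal.ofReal |t| ^ a) (Set.Ico (-R) 0)
    rw [← this]
    simpa using h0
  have hsub : Set.Icc (-R) R ⊆ (Set.Ico (-R) 0 ∪ Set.Ioc 0 R) ∪ {0} := by
    intro t ht
    rcases lt_trichotomy t 0 with h | h | h
    · exact Or.inl (Or.inl ⟨ht.1, h⟩)
    · exact Or.inr h
    · exact Or.inl (Or.inr ⟨h, ht.2⟩)
  refine (lintegral_mono_set hsub).trans_lt ?_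
  refine (lintegral_union_le _ _ _).trans_lt (ENNReal.add_lt_top.2 ⟨?_, ?_⟩)
  · exact (lintegral_union_le _ _ _).trans_lt (ENNReal.add_lt_top.2 ⟨h1, h0⟩)
  · simp

/-- Distance factor, cut off to the ball. -/
noncomputable def phi {d : ℕ} (R s : ℝ) (k : EuclideanSpace ℝ (Fin d))
    (V : Submodule ℝ (EuclideanSpace ℝ (Fin d))) : ℝ≥0∞ :=
  (Metric.closedBall (0 : EuclideanSpace ℝ (Fin d)) R).indicator
    (fun k => ENNReal.ofReal (Metric.infDist k V) ^ s) k

lemma aux_inner (d m : ℕ) (hm : m < d) (R s : ℝ) (hs0 : s < 0) (hs : (m : ℝ) - d < s) :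
    ∃ C : ℝ≥0∞, C ≠ 0 ∧ C ≠ ⊤ ∧ ∀ V : Submodule ℝ (EuclideanSpace ℝ (Fin d)),
      Module.finrank ℝ V ≤ m → ∫⁻ k, phi R s k V ≤ C := by
  classical
  set p : ℕ := d - m with hp
  have hp0 : 0 < p := by omega
  have hpr : (p : ℝ) = d - m := by rw [hp, Nat.cast_sub hm.le]
  have hp0' : (0 : ℝ) < p := by exact_mod_cast hp0
  set a : ℝ := s / p with ha
  have ha1 : -1 < a := by rw [ha, lt_div_iff₀ hp0']; linarith
  have ha0 : a < 0 := div_neg_of_neg_of_pos hs0 hp0'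
  let b : Fin d → ℝ := fun i => if i.val < p then a else 0
  let g : Fin d → ℝ → ℝ≥0∞ := fun i => (Set.Icc (-R) R).indicator (fun t : ℝ => ENNReal.ofReal |t| ^ b i)
  have hg : ∀ i, Measurable (g i) := fun i => by
    refine Measurable.indicator ?_ measurableSet_Icc
    fun_prop
  refine ⟨(∏ i, ∫⁻ t, g i t) + 1, by simp, (ENNReal.add_lt_top.2
    ⟨ENNReal.prod_lt_top fun i _ => aux_one _ _ ?_, by simp⟩).ne, ?_⟩
  · by_cases h : i.val < p <;> simp [b, h, ha1]
  intro V hV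
  have hq : p ≤ Module.finrank ℝ Vᗮ := by
    have := V.finrank_add_finrank_orthogonal
    rw [finrank_euclideanSpace_fin] at this
    omega
  let u := stdOrthonormalBasis ℝ Vᗮ
  let v : Fin d → EuclideanSpace ℝ (Fin d) := fun i =>
    if h : i.val < p then (u ⟨i.val, h.trans_le hq⟩ : EuclideanSpace ℝ (Fin d)) else 0
  have hv : Orthonormal ℝ (Set.domRestrict {i : Fin d | i.val < p} v) := by
    have h1 : Orthonormal ℝ (fun i => (u i : EuclideanSpace ℝ (Fin d))) :=
      u.orthonormal.comp_linearIsometry Vᗮ.subtypeₗᵢ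
    have h2 := h1.comp (fun i : {i : Fin d | i.val < p} => (⟨i.1.val, i.2.trans_le hq⟩ : Fin (Module.finrank ℝ Vᗮ)))
      (by intro i j h; ext; simpa using h)
    convert h2 using 1
    ext1 i
    have := i.2
    simp only [Set.mem_ofPred_eq] at this
    simp [v, this]
  obtain ⟨B, hB⟩ := hv.exists_orthonormalBasis_extension_of_card_eq (by simp)
  have hBV : ∀ i : Fin d, i.val < p → B i ∈ Vᗮ := by
    intro i hi
    rw [hB i hi]
    simp [v, hi]
  have key : ∀ k, phi R s k V ≤ ∏ i, g i ((B.repr k) i) := by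
    intro k
    unfold phi
    by_cases hk : k ∈ Metric.closedBall (0 : EuclideanSpace ℝ (Fin d)) R
    swap
    · simp [Set.indicator_of_notMem hk]
    rw [Set.indicator_of_mem hk]
    have hk' : ‖k‖ ≤ R := by simpa using hk
    have hgi : ∀ i, g i (B.repr k i) = ENNReal.ofReal |B.repr k i| ^ b i := by
      intro i
      refine Set.indicator_of_mem ?_ _
      rw [Set.mem_Icc, ← abs_le, B.repr_apply_apply]
      refine (abs_real_inner_le_norm _ _).trans ?_
      simpa using hk'
    have hdist : ∀ i : Fin d, i.val < p → |B.repr k i| ≤ Metric.infDist k V := by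
      intro i hi
      refine (Metric.le_infDist ⟨0, V.zero_mem⟩).2 fun w hw => ?_
      have h0 : inner ℝ (B i) w = 0 := by
        rw [real_inner_comm]; exact (hBV i hi) w hw
      have : B.repr k i = inner ℝ (B i) (k - w) := by
        rw [inner_sub_right, h0, B.repr_apply_apply, sub_zero]
      rw [this, dist_eq_norm]
      refine (abs_real_inner_le_norm _ _).trans ?_
      simp
    have e1 : ∏ i : Fin d, g i (B.repr k i) = ∏ i : Fin d with i.val < p, ENNReal.ofReal |B.repr k i| ^ a := by
      rw [Finset.prod_filter]
      refine Finset.prod_congr rfl fun i _ => ?_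
      rw [hgi]
      by_cases h : i.val < p <;> simp [b, h]
    have hcard : (Finset.univ.filter fun i : Fin d => i.val < p).card = p := by
      rw [Fin.card_filter_val_lt]; omega
    rw [e1]
    calc ENNReal.ofReal (Metric.infDist k V) ^ s
        = ∏ i : Fin d with i.val < p, ENNReal.ofReal (Metric.infDist k V) ^ a := by
          rw [Finset.prod_const, hcard, ← ENNReal.rpow_natCast, ← ENNReal.rpow_mul, ha, div_mul_cancel₀ _ hp0'.ne']
      _ ≤ _ := by
          refine Finset.prod_le_prod' fun i hi => ?_
          exact aux_rpow ha0.le (ENNReal.ofReal_le_ofReal (hdist i (by simpa using hi)))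
  have mp : MeasurePreserving (fun k => WithLp.ofLp (B.repr k)) volume volume :=
    (PiLp.volume_preserving_ofLp (Fin d)).comp B.measurePreserving_repr
  calc _ ≤ ∫⁻ k, ∏ i, g i ((B.repr k) i) := lintegral_mono key
    _ = ∫⁻ x : Fin d → ℝ, ∏ i, g i (x i) := by
      refine mp.lintegral_comp (f := fun x => ∏ i, g i (x i)) ?_
      exact Finset.measurable_prod _ fun i _ => (hg _).comp (measurable_pi_apply i)
    _ ≤ _ := (aux_pi d g hg).trans le_self_add

/-- The product of distances. -/
noncomputable def Phi {d : ℕ} (R s : ℝ) (m : ℕ) (K : Fin m → EuclideanSpace ℝ (Fin d)) : ℝ≥0∞ :=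
  ∏ i, phi R s (K i) (Submodule.span ℝ (K '' Set.Iio i))

lemma aux_Phi (d n : ℕ) (hnd : n ≤ d) (R s : ℝ) (hs0 : s < 0) (hs : (n : ℝ) - 1 - d < s) (m : ℕ)
    (hm : m ≤ n) : ∫⁻ K : Fin m → EuclideanSpace ℝ (Fin d), Phi R s m K < ⊤ := by
  induction m with
  | zero => simp [volume_pi, Phi]
  | succ m ih =>
    have hmn : (m : ℝ) + 1 ≤ n := by exact_mod_cast hm
    obtain ⟨C, hC0, hC, hV⟩ := aux_inner d m (by omega) R s hs0 (by linarith)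
    have h := (volume_preserving_piFinSuccAbove (fun _ : Fin (m+1) => EuclideanSpace ℝ (Fin d)) (Fin.last m)).symm
    rw [← h.lintegral_comp_emb (MeasurableEquiv.measurableEmbedding _)]
    rw [Measure.volume_eq_prod, ← Measure.measurePreserving_swap.lintegral_comp_emb (MeasurableEquiv.prodComm.measurableEmbedding)]
    refine (lintegral_prod_le _).trans_lt ?_
    have key : ∀ (K : Fin m → EuclideanSpace ℝ (Fin d)) (k : EuclideanSpace ℝ (Fin d)),
        Phi R s (m+1) ((MeasurableEquiv.piFinSuccAbove (fun _ : Fin (m+1) => EuclideanSpace ℝ (Fin d)) (Fin.last m)).symm (k, K))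
        = Phi R s m K * phi R s k (Submodule.span ℝ (Set.range K)) := by
      intro K k
      have : (MeasurableEquiv.piFinSuccAbove (fun _ : Fin (m+1) => EuclideanSpace ℝ (Fin d)) (Fin.last m)).symm (k, K) = (Fin.snoc K k : Fin (m+1) → EuclideanSpace ℝ (Fin d)) := by
        simp [MeasurableEquiv.piFinSuccAbove, Fin.insertNthEquiv]
      rw [this]
      unfold Phi
      rw [Fin.prod_univ_castSucc]
      congr 1
      · refine Finset.prod_congr rfl fun i _ => ?_
        rw [Fin.snoc_castSucc]
        congr 2
        ext x
        constructor
        · rintro ⟨j, hj, rfl⟩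
          have hjl : j ≠ Fin.last m := (lt_of_lt_of_le hj (Fin.le_last _)).ne
          obtain ⟨j', rfl⟩ := Fin.exists_castSucc_eq.2 hjl
          exact ⟨j', by simpa using hj, by simp⟩
        · rintro ⟨j, hj, rfl⟩
          exact ⟨j.castSucc, by simpa using hj, by simp⟩
      · rw [Fin.snoc_last]
        congr 2
        ext x
        constructor
        · rintro ⟨j, hj, rfl⟩
          obtain ⟨j', rfl⟩ := Fin.exists_castSucc_eq.2 (ne_of_lt hj)
          exact ⟨j', by simp⟩
        · rintro ⟨j, rfl⟩
          exact ⟨j.castSucc, by simp [Fin.castSucc_lt_last], by simp⟩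
    simp only [Prod.swap_prod_mk, key]
    calc _ ≤ ∫⁻ K : Fin m → EuclideanSpace ℝ (Fin d), C * Phi R s m K := by
          refine lintegral_mono fun K => ?_
          by_cases hK : Phi R s m K = ⊤
          · rw [hK, ENNReal.mul_top hC0]; exact le_top
          rw [lintegral_const_mul' _ _ hK, mul_comm]
          gcongr
          exact hV _ ((finrank_range_le_card K).trans (by simp))
      _ = C * ∫⁻ K, Phi R s m K := lintegral_const_mul' _ _ hC
      _ < ⊤ := ENNReal.mul_lt_top hC.lt_top (ih (by omega))

lemma aux_normDet (d n : ℕ) (f : EuclideanSpace ℝ (Fin n) →ₗ[ℝ] EuclideanSpace ℝ (Fin d))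
    (K : Fin n → EuclideanSpace ℝ (Fin d)) (hf : ∀ i, f (EuclideanSpace.basisFun (Fin n) ℝ i) = K i) :
    ∏ i, Metric.infDist (K i) (Submodule.span ℝ (K '' Set.Iio i)) ≤ f.normDet := by
  classical
  have hrange : Submodule.span ℝ (Set.range K) = f.range := by
    have h1 : Set.range K = f '' Set.range (EuclideanSpace.basisFun (Fin n) ℝ) := by
      rw [← Set.range_comp]; congr 1; ext1 i; exact (hf i).symm
    rw [h1, Submodule.span_image]
    have h2 := (EuclideanSpace.basisFun (Fin n) ℝ).toBasis.span_eq
    rw [OrthonormalBasis.coe_toBasis] at h2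
    rw [h2, Submodule.map_top]
  by_cases h0 : f.normDet = 0
  · rw [h0]
    refine le_of_eq (Finset.prod_eq_zero_iff.2 ?_)
    by_contra! hne
    rw [LinearMap.normDet_eq_zero_iff_rank_range_ne, ← hrange] at h0
    apply h0
    have hgs : ∀ i, InnerProductSpace.gramSchmidt ℝ K i ≠ 0 := by
      intro i hi
      apply hne i (Finset.mem_univ _)
      have := InnerProductSpace.gramSchmidt_def'' ℝ K i
      refine Metric.infDist_zero_of_mem ?_
      rw [hi, zero_add] at this
      rw [SetLike.mem_coe, this, ← InnerProductSpace.span_gramSchmidt_Iio ℝ K i]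
      refine Submodule.sum_mem _ fun j hj => Submodule.smul_mem _ _ (Submodule.subset_span ⟨j, by simpa using hj, rfl⟩)
    have hli : LinearIndependent ℝ (InnerProductSpace.gramSchmidt ℝ K) :=
      linearIndependent_of_ne_zero_of_inner_eq_zero hgs (InnerProductSpace.gramSchmidt_pairwise_orthogonal ℝ K)
    rw [← InnerProductSpace.span_gramSchmidt ℝ K, finrank_span_eq_card hli]
    simp
  · have hfr : Module.finrank ℝ f.range = Fintype.card (Fin n) := by
      by_contra h
      exact h0 (LinearMap.normDet_eq_zero_iff_rank_range_ne.2 (by simpa using h))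
    let K' : Fin n → f.range := fun i => f.rangeRestrict (EuclideanSpace.basisFun (Fin n) ℝ i)
    let B := InnerProductSpace.gramSchmidtOrthonormalBasis hfr K'
    have hd := InnerProductSpace.gramSchmidtOrthonormalBasis_det hfr K'
    rw [LinearMap.normDet_eq_norm_det_toMatrix_rangeRestrict f (EuclideanSpace.basisFun (Fin n) ℝ) B]
    have e1 : (LinearMap.toMatrix (EuclideanSpace.basisFun (Fin n) ℝ).toBasis B.toBasis f.rangeRestrict) = B.toBasis.toMatrix K' := by
      ext i j
      simp [LinearMap.toMatrix_apply, Module.Basis.toMatrix_apply, K']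
    rw [e1, ← Module.Basis.det_apply, hd, norm_prod]
    refine Finset.prod_le_prod (fun _ _ => Metric.infDist_nonneg) fun i _ => ?_
    have hli : LinearIndependent ℝ K' := by
      have hker : f.rangeRestrict.ker = ⊥ := by
        rw [LinearMap.ker_rangeRestrict]
        by_contra h
        exact h0 (LinearMap.normDet_eq_zero_iff_ker_ne_bot.2 h)
      have := (EuclideanSpace.basisFun (Fin n) ℝ).toBasis.linearIndependent.map' f.rangeRestrict hker
      simpa [K', Function.comp_def] using this
    have hgs := InnerProductSpace.gramSchmidt_ne_zero (𝕜 := ℝ) i hli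
    have hnn : InnerProductSpace.gramSchmidtNormed ℝ K' i ≠ 0 := by
      intro h
      have := InnerProductSpace.gramSchmidtNormed_unit_length (𝕜 := ℝ) i hli
      rw [h] at this; simp at this
    have hK := InnerProductSpace.gramSchmidt_def'' ℝ K' i
    set w := ∑ j ∈ Finset.Iio i, (inner ℝ (InnerProductSpace.gramSchmidt ℝ K' j) (K' i) / (‖InnerProductSpace.gramSchmidt ℝ K' j‖ : ℝ) ^ 2) • InnerProductSpace.gramSchmidt ℝ K' j with hw
    have hK2 : K' i = InnerProductSpace.gramSchmidt ℝ K' i + w := hK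
    have hwm : w ∈ Submodule.span ℝ (K' '' Set.Iio i) := by
      rw [← InnerProductSpace.span_gramSchmidt_Iio ℝ K' i]
      exact Submodule.sum_mem _ fun j hj => Submodule.smul_mem _ _ (Submodule.subset_span ⟨j, by simpa using hj, rfl⟩)
    have hwm' : (w : EuclideanSpace ℝ (Fin d)) ∈ Submodule.span ℝ (K '' Set.Iio i) := by
      have h1 := Submodule.mem_map_of_mem (f := f.range.subtype) hwm
      rw [Submodule.map_span, ← Set.image_comp] at h1
      have h2 : (f.range.subtype ∘ K') = K := by ext1 j; simp [K', ← hf]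
      rw [h2] at h1
      exact h1
    have hd1 : Metric.infDist (K i) (Submodule.span ℝ (K '' Set.Iio i)) ≤ ‖InnerProductSpace.gramSchmidt ℝ K' i‖ := by
      refine (Metric.infDist_le_dist_of_mem hwm').trans (le_of_eq ?_)
      have : K i = (K' i : EuclideanSpace ℝ (Fin d)) := by simp [K', ← hf]
      rw [this, dist_eq_norm, ← Submodule.coe_sub, Submodule.coe_norm]
      nth_rw 1 [hK2]; rw [add_sub_cancel_right]
    refine hd1.trans (le_of_eq ?_)
    rw [InnerProductSpace.gramSchmidtOrthonormalBasis_apply hfr hnn]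
    have hort : inner ℝ (InnerProductSpace.gramSchmidt ℝ K' i) w = 0 := by
      rw [hw, inner_sum]
      refine Finset.sum_eq_zero fun j hj => ?_
      refine (real_inner_smul_right (InnerProductSpace.gramSchmidt ℝ K' i) (InnerProductSpace.gramSchmidt ℝ K' j) _).trans ?_
      rw [InnerProductSpace.gramSchmidt_orthogonal ℝ K' (Finset.mem_Iio.1 hj).ne', mul_zero]
    have hin : inner ℝ (InnerProductSpace.gramSchmidtNormed ℝ K' i) (K' i) =
        inner ℝ (InnerProductSpace.gramSchmidtNormed ℝ K' i) (InnerProductSpace.gramSchmidt ℝ K' i + w) :=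
      congrArg _ hK2
    rw [hin]
    rw [InnerProductSpace.gramSchmidtNormed, inner_smul_left, inner_add_right, hort, add_zero, real_inner_self_eq_norm_sq]
    have : ‖InnerProductSpace.gramSchmidt ℝ K' i‖ ≠ 0 := norm_ne_zero_iff.2 hgs
    simp
    field_simp

lemma aux_main (n d : ℕ) : ∃ c : ℝ≥0∞, c ≠ 0 ∧ c ≠ ⊤ ∧
    ∀ K : Fin n → EuclideanSpace ℝ (Fin d),
    c * ENNReal.ofReal (∏ i, Metric.infDist (K i) (Submodule.span ℝ (K '' Set.Iio i))) ≤
      μH[(n : ℝ)] (convexHull ℝ (insert 0 (Set.range K))) ∧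
    ∀ R : ℝ, (∀ i, ‖K i‖ ≤ R) →
      μH[(n : ℝ)] (convexHull ℝ (insert 0 (Set.range K))) ≤
        (ENNReal.ofReal (n * R)) ^ (n : ℝ) * c := by
  set S : Set (EuclideanSpace ℝ (Fin n)) := convexHull ℝ (insert 0 (Set.range (EuclideanSpace.basisFun (Fin n) ℝ))) with hS
  have hfin : Module.finrank ℝ (EuclideanSpace ℝ (Fin n)) = n := by simp
  have haar : Measure.IsAddHaarMeasure (μH[(n : ℝ)] : Measure (EuclideanSpace ℝ (Fin n))) := by
    have := isAddHaarMeasure_hausdorffMeasure (E := EuclideanSpace ℝ (Fin n))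
    rwa [hfin] at this
  have hcomp : IsCompact S := ((Set.finite_range _).insert _).isCompact_convexHull ℝ
  have hint : (interior S).Nonempty := by
    rw [hS, interior_convexHull_nonempty_iff_affineSpan_eq_top]
    apply SetLike.coe_injective
    rw [affineSpan_insert_zero]
    have h2 := (EuclideanSpace.basisFun (Fin n) ℝ).toBasis.span_eq
    rw [OrthonormalBasis.coe_toBasis] at h2
    rw [h2]
    rfl
  refine ⟨μH[(n : ℝ)] S, (Measure.measure_pos_of_nonempty_interior _ hint).ne', hcomp.measure_lt_top.ne, fun K => ?_⟩
  let f : EuclideanSpace ℝ (Fin n) →ₗ[ℝ] EuclideanSpace ℝ (Fin d) :=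
    (EuclideanSpace.basisFun (Fin n) ℝ).toBasis.constr ℝ K
  have hf : ∀ i, f (EuclideanSpace.basisFun (Fin n) ℝ i) = K i := by
    intro i
    have := (EuclideanSpace.basisFun (Fin n) ℝ).toBasis.constr_basis ℝ K i
    rwa [OrthonormalBasis.coe_toBasis] at this
  have himg : convexHull ℝ (insert 0 (Set.range K)) = f '' S := by
    rw [hS, f.image_convexHull, Set.image_insert_eq, map_zero, ← Set.range_comp]
    congr 3
    ext1 i; exact (hf i).symm
  rw [himg]
  constructor
  · have := f.hausdorffMeasure_image S
    rw [hfin] at this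
    rw [this, mul_comm]
    gcongr
    exact aux_normDet d n f K hf
  · intro R hK
    have hlip : LipschitzWith (Real.toNNReal (n * R)) f := by
      refine AddMonoidHomClass.lipschitz_of_bound f _ fun x => ?_
      have : f x = ∑ i, x i • K i := by
        simp [f, Module.Basis.constr_apply_fintype]
      rw [this]
      calc _ ≤ ∑ i, ‖x i • K i‖ := norm_sum_le _ _
        _ ≤ ∑ i : Fin n, R * ‖x‖ := by
          refine Finset.sum_le_sum fun i _ => ?_
          rw [norm_smul, mul_comm]
          have := PiLp.norm_apply_le x i
          exact mul_le_mul (hK i) this (norm_nonneg _) ((norm_nonneg _).trans (hK i))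
        _ = _ := by simp; ring
    exact hlip.hausdorffMeasure_image_le (by positivity) S

theorem stmt14 (n d : ℕ) (hn : 1 ≤ n) (hd : n - 1 ≤ d)
    (s : ℝ) (hs : (n : ℝ) - 1 - d < s) (R : ℝ) (hR : 0 < R) :
    ∫⁻ K in {K : Fin n → EuclideanSpace ℝ (Fin d) | ∀ i, ‖K i‖ ≤ R},
        (μH[(n : ℝ)] (convexHull ℝ (insert 0 (Set.range K)))) ^ s
      < ⊤ := by
  obtain ⟨c, hc0, hc, hK⟩ := aux_main n d
  have hset : {K : Fin n → EuclideanSpace ℝ (Fin d) | ∀ i, ‖K i‖ ≤ R} =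
      Set.pi Set.univ fun _ => Metric.closedBall 0 R := by
    ext K; simp
  have hmeas : MeasurableSet {K : Fin n → EuclideanSpace ℝ (Fin d) | ∀ i, ‖K i‖ ≤ R} := by
    rw [hset]; exact MeasurableSet.univ_pi fun _ => Metric.isClosed_closedBall.measurableSet
  rcases le_or_gt 0 s with h0 | h0
  · have hvol : volume {K : Fin n → EuclideanSpace ℝ (Fin d) | ∀ i, ‖K i‖ ≤ R} < ⊤ := by
      rw [hset]
      exact (isCompact_univ_pi fun _ => isCompact_closedBall _ _).measure_lt_top
    refine (setLIntegral_mono' (g := fun _ => ((ENNReal.ofReal (n * R)) ^ (n : ℝ) * c) ^ s) hmeas fun K hKm =>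
      ENNReal.rpow_le_rpow ((hK K).2 R hKm) h0).trans_lt ?_
    rw [setLIntegral_const]
    refine ENNReal.mul_lt_top (ENNReal.rpow_lt_top_of_nonneg h0 ?_) hvol
    exact ENNReal.mul_ne_top (ENNReal.rpow_ne_top_of_nonneg (by positivity) ENNReal.ofReal_ne_top) hc
  · have hnd : n ≤ d := by
      have : (n : ℝ) < d + 1 := by linarith
      have : n < d + 1 := by exact_mod_cast this
      omega
    have hcs : c ^ s ≠ ⊤ := by simp [ENNReal.rpow_eq_top_iff, hc0, hc]
    calc _ ≤ ∫⁻ K in {K : Fin n → EuclideanSpace ℝ (Fin d) | ∀ i, ‖K i‖ ≤ R}, c ^ s * Phi R s n K := by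
          refine setLIntegral_mono' hmeas fun K hKm => ?_
          refine (aux_rpow h0.le (hK K).1).trans (le_of_eq ?_)
          rw [ENNReal.mul_rpow_of_ne_top hc ENNReal.ofReal_ne_top]
          congr 1
          rw [ENNReal.ofReal_prod_of_nonneg fun _ _ => Metric.infDist_nonneg,
            ← ENNReal.prod_rpow_of_ne_top fun _ _ => ENNReal.ofReal_ne_top]
          unfold Phi phi
          refine Finset.prod_congr rfl fun i _ => ?_
          rw [Set.indicator_of_mem]
          simpa using hKm i
      _ ≤ ∫⁻ K, c ^ s * Phi R s n K := setLIntegral_le_lintegral _ _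
      _ = c ^ s * ∫⁻ K, Phi R s n K := lintegral_const_mul' _ _ hcs
      _ < ⊤ := ENNReal.mul_lt_top hcs.lt_top (aux_Phi d n hnd R s h0 hs n le_rfl)
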